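/- Let N be a positive integer, f : Fin N → ℝ with f i > 0 for all i and ∑ i, f i = 1. Let q, q̄ : Fin N → ℝ both be monotone nondecreasing, and suppose that for all i, j, q i = q j implies q̄ i = q̄ j. Then the following are equivalent: (1) there exists a finite Bayes-plausible posterior system (K, w, μ) for f such that q̄ i = (f i)⁻¹ * ∑ s, w s * μ s i * (∑ j, μ s j * q j) for every i; (2) q F-majorizes q̄, i.e., ∑_{j ≤ k} f j * q̄ j ≥ ∑_{j ≤ k} f j * q j for every k, and ∑ j, f j * q̄ j = ∑ j, f j * q j. -/

import Mathlib

open Finset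

/-!
Necessity: under any posterior, a nondecreasing quality is on average no larger on an initial
segment than overall. Averaging this over the signals gives the majorization inequalities.

Sufficiency: revealing the class of an equivalence relation implements the conditional expectation
of `q` given that class, and implementable vectors form a convex set. By Hahn-Banach it is enough
that each functional `y ↦ ∑ f d y` is at least as large at some such pooling of `q` as at `q̄`.
Let `u` be the isotonic regression of `d`, that is, its projection on the monotone cone in `L²(f)`,
and pool `q` over the level sets of `u`. Then
`∑ f d q̄ ≤ ∑ f u q̄ ≤ ∑ f u q = ∑ f u (pool q) = ∑ f d (pool q)`:
first because `d - u` is polar to the cone, then by summation by parts, by self-adjointness of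
conditional expectation, and finally because `u` stays in the cone when it is moved slightly in
either direction along a function constant on its level sets.
-/

section LinearOrder

variable {ι R : Type*} [LinearOrder ι] [CommRing R] [LinearOrder R] [IsStrictOrderedRing R]

lemma sum_mul_le_mul_sum_of_monotone {s : Finset ι} {u g : ι → R} {M : R} (hu : Monotone u)
    (hg : ∀ k ∈ s, 0 ≤ ∑ i ∈ s with i ≤ k, g i) (hM : ∀ i ∈ s, u i ≤ M) :
    ∑ i ∈ s, u i * g i ≤ M * ∑ i ∈ s, g i := by
  induction s using Finset.induction_on_max generalizing M with
  | empty => simp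
  | insert a s hlt ih =>
    have ha : a ∉ s := fun h => (hlt a h).false
    have hinitial : ∀ k ∈ s, 0 ≤ ∑ i ∈ s with i ≤ k, g i := fun k hk => by
      simpa [filter_insert, (hlt k hk).not_ge] using hg k (mem_insert_of_mem hk)
    have htotal : 0 ≤ ∑ i ∈ insert a s, g i := by
      have hall : ∀ i ∈ insert a s, i ≤ a := by
        simpa using fun i hi => (hlt i hi).le
      simpa only [filter_true_of_mem hall] using hg a (mem_insert_self a s)
    calc ∑ i ∈ insert a s, u i * g i = u a * g a + ∑ i ∈ s, u i * g i := sum_insert ha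
      _ ≤ u a * g a + u a * ∑ i ∈ s, g i := by
        gcongr
        exact ih hinitial fun i hi => hu (hlt i hi).le
      _ = u a * ∑ i ∈ insert a s, g i := by rw [sum_insert ha, mul_add]
      _ ≤ M * ∑ i ∈ insert a s, g i := by
        gcongr
        exact hM a (mem_insert_self a s)

lemma sum_filter_le_mul_sum_of_monotone [Fintype ι] {p q : ι → R} (hq : Monotone q)
    (hp : ∀ i, 0 ≤ p i) (hp1 : ∑ i, p i = 1) (k : ι) :
    ∑ i with i ≤ k, p i * q i ≤ (∑ i with i ≤ k, p i) * ∑ i, p i * q i := by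
  have hlower : ∑ i with i ≤ k, p i * q i ≤ (∑ i with i ≤ k, p i) * q k := by
    rw [sum_mul]
    exact sum_le_sum fun i hi => mul_le_mul_of_nonneg_left (hq (mem_filter.1 hi).2) (hp i)
  have hupper : (∑ i with ¬i ≤ k, p i) * q k ≤ ∑ i with ¬i ≤ k, p i * q i := by
    rw [sum_mul]
    exact sum_le_sum fun i hi =>
      mul_le_mul_of_nonneg_left (hq (not_le.1 (mem_filter.1 hi).2).le) (hp i)
  have hlower_nonneg : 0 ≤ ∑ i with i ≤ k, p i := sum_nonneg fun i _ => hp i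
  have hupper_nonneg : 0 ≤ ∑ i with ¬i ≤ k, p i := sum_nonneg fun i _ => hp i
  rw [← sum_filter_add_sum_filter_not univ (· ≤ k)] at hp1
  rw [← sum_filter_add_sum_filter_not univ (· ≤ k) fun i => p i * q i]
  linear_combination (∑ i with i ≤ k, p i) * hupper + (∑ i with ¬i ≤ k, p i) * hlower
    - (∑ i with i ≤ k, p i * q i) * hp1

end LinearOrder

section IsotonicRegression

open Filter Topology

variable {ι : Type*}

lemma exists_pos_monotone_add_smul [Finite ι] [Preorder ι] {u g : ι → ℝ} (hu : Monotone u)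
    (hg : ∀ i j, u i = u j → g i = g j) : ∃ t : ℝ, 0 < t ∧ Monotone (u + t • g) := by
  have hpair : ∀ i j, i ≤ j → ∀ᶠ t : ℝ in 𝓝[>] 0, (u + t • g) i ≤ (u + t • g) j := by
    intro i j hij
    rcases (hu hij).eq_or_lt with heq | hlt
    · simp [heq, hg i j heq]
    · have hcont : ∀ k, Tendsto (fun t : ℝ => (u + t • g) k) (𝓝[>] 0) (𝓝 (u k)) := fun k => by
        have : Continuous fun t : ℝ => (u + t • g) k := by
          simp only [Pi.add_apply, Pi.smul_apply]
          fun_prop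
        simpa using (this.tendsto 0).mono_left nhdsWithin_le_nhds
      exact ((hcont i).eventually_lt (hcont j) hlt).mono fun _ => le_of_lt
  have hmono : ∀ᶠ t : ℝ in 𝓝[>] 0, Monotone (u + t • g) := by
    simpa only [Monotone, eventually_all] using hpair
  exact (eventually_mem_nhdsWithin.and hmono).exists

variable [Fintype ι] {f : ι → ℝ}

lemma exists_weighted_projection (hf : ∀ i, 0 < f i) {C : Set (ι → ℝ)} (hne : C.Nonempty)
    (hconv : Convex ℝ C) (hclosed : IsClosed C) (d : ι → ℝ) :
    ∃ u ∈ C, ∀ v ∈ C, ∑ i, f i * ((d i - u i) * (v i - u i)) ≤ 0 := by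
  let unscale : EuclideanSpace ℝ ι →L[ℝ] ι → ℝ :=
    ContinuousLinearMap.pi fun i => (√(f i))⁻¹ • EuclideanSpace.proj i
  let scale (v : ι → ℝ) : EuclideanSpace ℝ ι := WithLp.toLp 2 fun i => √(f i) * v i
  have hsqrt : ∀ i, √(f i) ≠ 0 := fun i => (Real.sqrt_pos.2 (hf i)).ne'
  have hunscale : ∀ v, unscale (scale v) = v := fun v => by
    ext i
    simp [unscale, scale, hsqrt i]
  have hscale : ∀ z, scale (unscale z) = z := fun z => by
    ext i
    simp [unscale, scale, hsqrt i]
  have hinner : ∀ u v, inner ℝ (scale d - scale u) (scale v - scale u) =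
      ∑ i, f i * ((d i - u i) * (v i - u i)) := fun u v => by
    simp only [scale, PiLp.inner_apply, PiLp.sub_apply, RCLike.inner_apply, conj_trivial]
    refine sum_congr rfl fun i _ => ?_
    linear_combination (d i - u i) * (v i - u i) * Real.mul_self_sqrt (hf i).le
  have hconv' : Convex ℝ (unscale ⁻¹' C) := hconv.linear_preimage unscale.toLinearMap
  have hmem : ∀ v ∈ C, scale v ∈ unscale ⁻¹' C := fun v hv => by
    rwa [Set.mem_preimage, hunscale]
  obtain ⟨v₀, hv₀⟩ := hne
  obtain ⟨z, hz, hmin⟩ := exists_norm_eq_iInf_of_complete_convex ⟨_, hmem v₀ hv₀⟩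
    (hclosed.preimage unscale.continuous).isComplete hconv' (scale d)
  refine ⟨unscale z, hz, fun v hv => ?_⟩
  rw [← hinner, hscale]
  exact (norm_eq_iInf_iff_real_inner_le_zero hconv' hz).1 hmin _ (hmem v hv)

lemma exists_isotonic_regression [Preorder ι] (hf : ∀ i, 0 < f i) (d : ι → ℝ) :
    ∃ u : ι → ℝ, Monotone u ∧
      (∀ v : ι → ℝ, Monotone v → ∑ i, f i * ((d i - u i) * v i) ≤ 0) ∧
      ∀ g : ι → ℝ, (∀ i j, u i = u j → g i = g j) → ∑ i, f i * ((d i - u i) * g i) = 0 := by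
  have hconv : Convex ℝ {u : ι → ℝ | Monotone u} := fun u hu v hv a b ha hb _ =>
    (hu.const_mul ha).add (hv.const_mul hb)
  obtain ⟨u, hu, hproj⟩ :=
    exists_weighted_projection hf ⟨0, monotone_const⟩ hconv isClosed_monotone d
  have hfeasible : ∀ (v : ι → ℝ) (t : ℝ), 0 < t → Monotone (u + t • v) →
      ∑ i, f i * ((d i - u i) * v i) ≤ 0 := fun v t ht hmono => by
    refine nonpos_of_mul_nonpos_right ?_ ht
    simpa [mul_sum, mul_left_comm t] using hproj _ hmono
  have hlevel : ∀ g : ι → ℝ, (∀ i j, u i = u j → g i = g j) →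
      ∑ i, f i * ((d i - u i) * g i) ≤ 0 := fun g hg => by
    obtain ⟨t, ht, hmono⟩ := exists_pos_monotone_add_smul hu hg
    exact hfeasible g t ht hmono
  refine ⟨u, hu, fun v hv => hfeasible v 1 one_pos ?_, fun g hg => (hlevel g hg).antisymm ?_⟩
  · rw [one_smul]
    exact hu.add hv
  · simpa using hlevel (-g) fun i j hij => congrArg Neg.neg (hg i j hij)

end IsotonicRegression

lemma mem_convexHull_of_forall_exists_sum_le {ι : Type*} [Fintype ι] {S : Set (ι → ℝ)}
    (hS : S.Finite) {x : ι → ℝ}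
    (h : ∀ c : ι → ℝ, ∃ y ∈ S, ∑ i, c i * x i ≤ ∑ i, c i * y i) : x ∈ convexHull ℝ S := by
  classical
  by_contra hx
  obtain ⟨l, b, hlS, hlx⟩ :=
    geometric_hahn_banach_closed_point (convex_convexHull ℝ S) (hS.isClosed_convexHull ℝ) hx
  let c (i : ι) : ℝ := l fun j => if i = j then 1 else 0
  have hl : ∀ z, l z = ∑ i, c i * z i := fun z =>
    (l.pi_apply_eq_sum_univ z).trans (sum_congr rfl fun i _ => mul_comm (z i) (c i))
  obtain ⟨y, hy, hxy⟩ := h c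
  rw [← hl, ← hl] at hxy
  exact (hxy.trans_lt (hlS y (subset_convexHull ℝ S hy))).not_gt hlx

section Pooling

variable {ι : Type*} [Fintype ι] {f : ι → ℝ} {r : Setoid ι}

open Classical in
/-- The posterior after learning that the type lies in the `r`-class of `i`, under the prior `f`. -/
noncomputable def classPosterior (f : ι → ℝ) (r : Setoid ι) (i j : ι) : ℝ :=
  if r i j then f j / ∑ k with r i k, f k else 0

/-- The conditional expectation of `q` given the `r`-class, under the prior `f`. -/
noncomputable def pool (f : ι → ℝ) (r : Setoid ι) (q : ι → ℝ) (i : ι) : ℝ :=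
  ∑ j, classPosterior f r i j * q j

lemma classPosterior_nonneg (hf : ∀ i, 0 ≤ f i) (i j : ι) : 0 ≤ classPosterior f r i j := by
  unfold classPosterior
  split_ifs
  · exact div_nonneg (hf j) (sum_nonneg fun k _ => hf k)
  · exact le_rfl

lemma sum_classPosterior (hf : ∀ i, 0 < f i) (i : ι) : ∑ j, classPosterior f r i j = 1 := by
  classical
  have hpos : 0 < ∑ k with r i k, f k :=
    sum_pos (fun k _ => hf k) ⟨i, mem_filter.2 ⟨mem_univ i, r.refl i⟩⟩
  simp only [classPosterior, ← sum_filter, ← sum_div]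
  convert div_self hpos.ne'

lemma classPosterior_congr {i i' : ι} (h : r i i') :
    classPosterior f r i = classPosterior f r i' := by
  have hclass : r i = r i' := funext fun j => propext ⟨r.trans (r.symm h), r.trans h⟩
  unfold classPosterior
  rw [hclass]

lemma mul_classPosterior_comm (f : ι → ℝ) (r : Setoid ι) (i j : ι) :
    f i * classPosterior f r i j = f j * classPosterior f r j i := by
  by_cases h : r i j
  · rw [← classPosterior_congr h]
    simp only [classPosterior, h, r.refl i, if_true]
    ring
  · simp only [classPosterior, h, mt r.symm h, if_false, mul_zero]

lemma pool_congr {q : ι → ℝ} {i j : ι} (h : r i j) : pool f r q i = pool f r q j := by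
  simp only [pool, classPosterior_congr h]

lemma pool_eq_self (hf : ∀ i, 0 < f i) {q : ι → ℝ} (hq : ∀ i j, r i j → q i = q j) :
    pool f r q = q := by
  ext i
  calc pool f r q i = ∑ j, classPosterior f r i j * q i := sum_congr rfl fun j _ => by
        by_cases h : r i j
        · rw [hq i j h]
        · simp [classPosterior, h]
    _ = q i := by rw [← sum_mul, sum_classPosterior hf, one_mul]

lemma sum_mul_pool_comm (f : ι → ℝ) (r : Setoid ι) (a b : ι → ℝ) :
    ∑ i, f i * (a i * pool f r b i) = ∑ i, f i * (pool f r a i * b i) := by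
  simp only [pool, mul_sum, sum_mul]
  rw [sum_comm]
  refine sum_congr rfl fun j _ => sum_congr rfl fun i _ => ?_
  linear_combination a i * b j * mul_classPosterior_comm f r i j

end Pooling

section Signals

variable {ι σ τ : Type*} [Fintype ι] [Fintype σ] [Fintype τ] {f q x : ι → ℝ}

/-- A Bayes-plausible system for the prior `f`: signal `s` has probability `w s` and induces the
posterior `μ s`. -/
structure IsPosteriorSystem (f : ι → ℝ) (w : σ → ℝ) (μ : σ → ι → ℝ) : Prop where
  weight_nonneg : ∀ s, 0 ≤ w s
  sum_weight : ∑ s, w s = 1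
  posterior_nonneg : ∀ s i, 0 ≤ μ s i
  sum_posterior : ∀ s, ∑ i, μ s i = 1
  bayes_plausible : ∀ i, ∑ s, w s * μ s i = f i

/-- The expectation, conditional on the type `i`, of the posterior mean of `q`. Dividing by `f i`
turns the joint probability of `s` and `i` into the probability of `s` given `i`. -/
noncomputable def signaledQuality (f q : ι → ℝ) (w : σ → ℝ) (μ : σ → ι → ℝ) (i : ι) : ℝ :=
  (f i)⁻¹ * ∑ s, w s * μ s i * ∑ j, μ s j * q j

/-- The quality vector `x` is the signaled quality of some finite rating system. -/
def Implementable (f q x : ι → ℝ) : Prop :=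
  ∃ (K : ℕ) (w : Fin K → ℝ) (μ : Fin K → ι → ℝ),
    IsPosteriorSystem f w μ ∧ ∀ i, x i = signaledQuality f q w μ i

/-- `q` F-majorizes `x`, where `F` is the distribution with weights `f`. The majorized vector is
the less dispersed one, so its initial sums are the larger ones. -/
def FMajorizes [Preorder ι] [DecidableLE ι] (f q x : ι → ℝ) : Prop :=
  (∀ k, ∑ j with j ≤ k, f j * x j ≥ ∑ j with j ≤ k, f j * q j) ∧
    ∑ j, f j * x j = ∑ j, f j * q j

lemma isPosteriorSystem_iff {w : σ → ℝ} {μ : σ → ι → ℝ} :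
    IsPosteriorSystem f w μ ↔ (∀ s, 0 ≤ w s) ∧ ∑ s, w s = 1 ∧ (∀ s i, 0 ≤ μ s i) ∧
      (∀ s, ∑ i, μ s i = 1) ∧ ∀ i, ∑ s, w s * μ s i = f i :=
  ⟨fun ⟨hw, hw1, hμ, hμ1, hf⟩ => ⟨hw, hw1, hμ, hμ1, hf⟩,
    fun ⟨hw, hw1, hμ, hμ1, hf⟩ => ⟨hw, hw1, hμ, hμ1, hf⟩⟩

namespace IsPosteriorSystem

variable {w : σ → ℝ} {μ : σ → ι → ℝ}

lemma comp_equiv (h : IsPosteriorSystem f w μ) (e : τ ≃ σ) :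
    IsPosteriorSystem f (w ∘ e) (μ ∘ e) where
  weight_nonneg s := h.weight_nonneg (e s)
  sum_weight := (e.sum_comp w).trans h.sum_weight
  posterior_nonneg s := h.posterior_nonneg (e s)
  sum_posterior s := h.sum_posterior (e s)
  bayes_plausible i := (e.sum_comp fun s => w s * μ s i).trans (h.bayes_plausible i)

lemma implementable (h : IsPosteriorSystem f w μ) (q : ι → ℝ) :
    Implementable f q (signaledQuality f q w μ) := by
  let e := (Fintype.equivFin σ).symm
  refine ⟨_, _, _, h.comp_equiv e, fun i => congrArg ((f i)⁻¹ * ·) ?_⟩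
  exact (e.sum_comp fun s => w s * μ s i * ∑ j, μ s j * q j).symm

lemma mix (h : IsPosteriorSystem f w μ) {v : τ → ℝ} {ν : τ → ι → ℝ}
    (h' : IsPosteriorSystem f v ν) {a b : ℝ} (ha : 0 ≤ a) (hb : 0 ≤ b) (hab : a + b = 1) :
    IsPosteriorSystem f (Sum.elim (a • w) (b • v)) (Sum.elim μ ν) where
  weight_nonneg := Sum.forall.2
    ⟨fun s => mul_nonneg ha (h.weight_nonneg s), fun s => mul_nonneg hb (h'.weight_nonneg s)⟩
  sum_weight := by simp [← mul_sum, h.sum_weight, h'.sum_weight, hab]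
  posterior_nonneg := Sum.forall.2 ⟨h.posterior_nonneg, h'.posterior_nonneg⟩
  sum_posterior := Sum.forall.2 ⟨h.sum_posterior, h'.sum_posterior⟩
  bayes_plausible i := by
    simp [mul_assoc, ← mul_sum, h.bayes_plausible, h'.bayes_plausible, ← add_mul, hab]

end IsPosteriorSystem

lemma signaledQuality_mix (f q : ι → ℝ) (w : σ → ℝ) (μ : σ → ι → ℝ) (v : τ → ℝ)
    (ν : τ → ι → ℝ) (a b : ℝ) :
    signaledQuality f q (Sum.elim (a • w) (b • v)) (Sum.elim μ ν) =
      a • signaledQuality f q w μ + b • signaledQuality f q v ν := by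
  ext i
  simp only [signaledQuality, Fintype.sum_sum_type, Sum.elim_inl, Sum.elim_inr, Pi.add_apply,
    Pi.smul_apply, smul_eq_mul, mul_assoc, ← mul_sum]
  ring

lemma convex_implementable (f q : ι → ℝ) : Convex ℝ {x | Implementable f q x} := by
  rintro x ⟨K, w, μ, h, hx⟩ y ⟨L, v, ν, h', hy⟩ a b ha hb hab
  rw [funext hx, funext hy, ← signaledQuality_mix]
  exact (h.mix h' ha hb hab).implementable q

lemma sum_mul_signaledQuality (hf : ∀ i, f i ≠ 0) (q : ι → ℝ) (w : σ → ℝ) (μ : σ → ι → ℝ)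
    (A : Finset ι) :
    ∑ i ∈ A, f i * signaledQuality f q w μ i =
      ∑ s, w s * ((∑ i ∈ A, μ s i) * ∑ j, μ s j * q j) := by
  simp only [signaledQuality, mul_inv_cancel_left₀ (hf _)]
  rw [sum_comm]
  simp only [mul_assoc, ← mul_sum, ← sum_mul]

lemma IsPosteriorSystem.sum_mul {w : σ → ℝ} {μ : σ → ι → ℝ} (h : IsPosteriorSystem f w μ)
    (q : ι → ℝ) (A : Finset ι) :
    ∑ i ∈ A, f i * q i = ∑ s, w s * ∑ i ∈ A, μ s i * q i := by
  simp only [← h.bayes_plausible, Finset.sum_mul, mul_sum, mul_assoc]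
  exact sum_comm

lemma Implementable.fMajorizes [LinearOrder ι] (hf : ∀ i, f i ≠ 0) (hq : Monotone q)
    (hx : Implementable f q x) : FMajorizes f q x := by
  obtain ⟨K, w, μ, h, hx⟩ := hx
  simp only [FMajorizes, funext hx, sum_mul_signaledQuality hf, h.sum_mul q, h.sum_posterior,
    one_mul, and_true]
  intro k
  gcongr with s
  · exact h.weight_nonneg s
  · exact sum_filter_le_mul_sum_of_monotone hq (h.posterior_nonneg s) (h.sum_posterior s) k

lemma isPosteriorSystem_classPosterior (hf : ∀ i, 0 < f i) (hfsum : ∑ i, f i = 1)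
    (r : Setoid ι) : IsPosteriorSystem f f (classPosterior f r) where
  weight_nonneg i := (hf i).le
  sum_weight := hfsum
  posterior_nonneg := classPosterior_nonneg fun i => (hf i).le
  sum_posterior := sum_classPosterior hf
  bayes_plausible i := by
    simp only [mul_classPosterior_comm f r _ i, ← mul_sum, sum_classPosterior hf, mul_one]

lemma signaledQuality_classPosterior (hf : ∀ i, 0 < f i) (r : Setoid ι) (q : ι → ℝ) :
    signaledQuality f q f (classPosterior f r) = pool f r q := by
  ext i
  calc signaledQuality f q f (classPosterior f r) i
      = pool f r (pool f r q) i := by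
        simp only [signaledQuality, mul_classPosterior_comm f r _ i, mul_assoc, ← mul_sum]
        exact inv_mul_cancel_left₀ (hf i).ne' _
    _ = pool f r q i := by rw [pool_eq_self hf fun _ _ => pool_congr]

lemma implementable_pool (hf : ∀ i, 0 < f i) (hfsum : ∑ i, f i = 1) (r : Setoid ι) (q : ι → ℝ) :
    Implementable f q (pool f r q) := by
  rw [← signaledQuality_classPosterior hf]
  exact (isPosteriorSystem_classPosterior hf hfsum r).implementable q

namespace FMajorizes

variable [LinearOrder ι]

lemma sum_mul_le {u : ι → ℝ} (h : FMajorizes f q x) (hu : Monotone u) :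
    ∑ i, f i * (u i * x i) ≤ ∑ i, f i * (u i * q i) := by
  obtain ⟨M, hM⟩ := Finite.bddAbove_range u
  have habel := sum_mul_le_mul_sum_of_monotone (s := univ) (g := fun i => f i * x i - f i * q i)
    hu (fun k _ => by simpa using h.1 k) fun i _ => hM ⟨i, rfl⟩
  simp only [mul_sub, sum_sub_distrib, h.2, sub_self, mul_zero] at habel
  simpa [mul_left_comm] using habel

lemma exists_sum_mul_le_pool (h : FMajorizes f q x) (hf : ∀ i, 0 < f i) (hx : Monotone x)
    (d : ι → ℝ) : ∃ r, ∑ i, f i * (d i * x i) ≤ ∑ i, f i * (d i * pool f r q i) := by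
  obtain ⟨u, hu, hpolar, hlevel⟩ := exists_isotonic_regression hf d
  let r := Setoid.ker u
  have hd := hpolar x hx
  have hpool := hlevel (pool f r q) fun _ _ h => pool_congr h
  simp only [sub_mul, mul_sub, sum_sub_distrib, sub_nonpos, sub_eq_zero] at hd hpool
  refine ⟨r, ?_⟩
  calc ∑ i, f i * (d i * x i) ≤ ∑ i, f i * (u i * x i) := hd
    _ ≤ ∑ i, f i * (u i * q i) := h.sum_mul_le hu
    _ = ∑ i, f i * (pool f r u i * q i) := by rw [pool_eq_self hf fun _ _ => id]
    _ = ∑ i, f i * (u i * pool f r q i) := (sum_mul_pool_comm f r u q).symm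
    _ = ∑ i, f i * (d i * pool f r q i) := hpool.symm

lemma mem_convexHull_range_pool (h : FMajorizes f q x) (hf : ∀ i, 0 < f i) (hx : Monotone x) :
    x ∈ convexHull ℝ (Set.range fun r => pool f r q) := by
  have : Finite (Setoid ι) :=
    Finite.of_injective (fun r : Setoid ι => (r : ι → ι → Prop)) fun r r' h =>
      Setoid.ext fun i j => iff_of_eq (congrFun₂ h i j)
  refine mem_convexHull_of_forall_exists_sum_le (Set.finite_range _) fun c => ?_
  obtain ⟨r, hr⟩ := h.exists_sum_mul_le_pool hf hx (fun i => (f i)⁻¹ * c i)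
  simp only [mul_assoc, mul_inv_cancel_left₀ (hf _).ne'] at hr
  exact ⟨_, ⟨r, rfl⟩, hr⟩

lemma implementable (h : FMajorizes f q x) (hf : ∀ i, 0 < f i) (hfsum : ∑ i, f i = 1)
    (hx : Monotone x) : Implementable f q x := by
  refine convexHull_min ?_ (convex_implementable f q) (h.mem_convexHull_range_pool hf hx)
  rintro _ ⟨r, rfl⟩
  exact implementable_pool hf hfsum r q

end FMajorizes

theorem implementable_iff_majorized_general [LinearOrder ι] (hf : ∀ i, 0 < f i)
    (hfsum : ∑ i, f i = 1) (hq : Monotone q) (hx : Monotone x) :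
    Implementable f q x ↔ FMajorizes f q x :=
  ⟨fun h => h.fMajorizes (fun i => (hf i).ne') hq, fun h => h.implementable hf hfsum hx⟩

end Signals

/-- Full characterization of implementable signaled qualities:
for nondecreasing `q`, `q̄` (with `q̄` constant on level sets of `q`), `q̄`
arises from some finite Bayes-plausible posterior system for `f` applied to
`q` if and only if `q` F-majorizes `q̄`. -/
theorem implementable_iff_majorized
    (N : ℕ) (hN : 0 < N)
    (f : Fin N → ℝ) (hf : ∀ i, 0 < f i) (hfsum : ∑ i, f i = 1)
    (q qbar : Fin N → ℝ)
    (hq : ∀ i j : Fin N, i ≤ j → q i ≤ q j)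
    (hqbar : ∀ i j : Fin N, i ≤ j → qbar i ≤ qbar j)
    (hconst : ∀ i j : Fin N, q i = q j → qbar i = qbar j) :
    (∃ (K : ℕ) (w : Fin K → ℝ) (μ : Fin K → Fin N → ℝ),
      (∀ s, 0 ≤ w s) ∧ (∑ s, w s = 1) ∧
      (∀ s i, 0 ≤ μ s i) ∧ (∀ s, ∑ i, μ s i = 1) ∧
      (∀ i, ∑ s, w s * μ s i = f i) ∧
      (∀ i, qbar i = (f i)⁻¹ * ∑ s, w s * μ s i * (∑ j, μ s j * q j))) ↔
    ((∀ k : Fin N,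
        ∑ j ∈ Finset.filter (fun j => j ≤ k) Finset.univ, f j * qbar j ≥
        ∑ j ∈ Finset.filter (fun j => j ≤ k) Finset.univ, f j * q j) ∧
      (∑ j, f j * qbar j = ∑ j, f j * q j)) := by
  simpa only [Implementable, isPosteriorSystem_iff, signaledQuality, FMajorizes, and_assoc] using
    implementable_iff_majorized_general hf hfsum (fun i j => hq i j) fun i j => hqbar i j
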